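/- Let k be a Hilbertian field and G a finite group. Then there exists a finite separable extension E of the rational function field k(T) such that Aut(E/k(T)) is isomorphic to G and [E·k̄ : k̄(T)] ≥ 2, where k̄ is an algebraic closure of k. -/

import Mathlib

open Polynomial IntermediateField

/-- A field `k` is *Hilbertian* if Hilbert's irreducibility theorem holds over `k`:
for every polynomial `P(T,X) ∈ k[T][X]` which is irreducible over the rational function
field `k(T)`, there are infinitely many specializations `t₀ ∈ k` such that `P(t₀,X)` is
irreducible over `k`. -/
def IsHilbertian (k : Type*) [Field k] : Prop :=
  ∀ P : Polynomial (Polynomial k),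
    Irreducible (P.map (algebraMap (Polynomial k) (RatFunc k))) →
    {t₀ : k | Irreducible (P.map (Polynomial.evalRingHom t₀))}.Infinite

set_option synthInstance.maxHeartbeats 400000

/-!
Let `F / k(T)` be Galois with group `P`, and let `H ≤ P` have trivial normal core. The fixed field
`E` of `H` has normal closure `F` and automorphism group `N_P(H) / H`. As `k̄(T)` is normal over
`k(T)`, it contains `E` only if it contains `F`.

For `P` a symmetric group of prime degree `n + 2` with `n ≠ 0` in `k`, take the splitting field of
`f(X) - T` with `f = X ^ (n + 2) - X ^ 2`. This polynomial is linear in `T`, hence irreducible over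
`k(T)` and over `k̄(T)`, so its roots lie outside `k̄(T)` and `P` is transitive. By Hensel's lemma
its roots in `k̄((T))` lift the `n` simple roots of `f`. An automorphism over `k̄((T))` moving one
of the two remaining roots is a transposition, and a transitive group of prime degree containing a
transposition is the symmetric group.

Every finite group `G` is `N(H) / H` for a core-free subgroup `H` of every large symmetric group.
Let `H` permute each of `card G` disjoint copies of a set `B` arbitrarily. Permutations normalizing
`H` permute the copies. To cut these permutations down to the left translations of `G`, adjoin all
families of subsets of the copies with cardinalities prescribed by the position relative to a base
point, and let `G` and `H` act on them. A further set, permuted arbitrarily by `H`, makes `H`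
core-free and adjusts the degree. The sizes of the `H`-orbits tell the three kinds of points apart.
-/

section FiberPolynomial

section CommRing

variable {k : Type*} [CommRing k]

/-- The polynomial `f(X) - t`, whose roots form the fibre of `f` over `t`. -/
noncomputable def fiberPolynomial {A : Type*} [CommRing A] [Algebra k A] (f : k[X]) (t : A) :
    A[X] :=
  f.map (algebraMap k A) - C t

variable {A B : Type*} [CommRing A] [Algebra k A] [CommRing B] [Algebra k B]

theorem eval_fiberPolynomial (f : k[X]) (t x : A) :
    (fiberPolynomial f t).eval x = aeval x f - t := by
  simp [fiberPolynomial, eval_map_algebraMap]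

theorem aeval_fiberPolynomial [Algebra A B] [IsScalarTower k A B] (f : k[X]) (t : A) (x : B) :
    aeval x (fiberPolynomial f t) = aeval x f - algebraMap A B t := by
  simp only [fiberPolynomial, map_sub, aeval_map_algebraMap, aeval_C]

theorem derivative_fiberPolynomial (f : k[X]) (t : A) :
    (fiberPolynomial f t).derivative = f.derivative.map (algebraMap k A) := by
  simp [fiberPolynomial]

theorem map_fiberPolynomial (f : k[X]) (φ : A →ₐ[k] B) (t : A) :
    (fiberPolynomial f t).map (φ : A →+* B) = fiberPolynomial f (φ t) := by
  simp [fiberPolynomial, Polynomial.map_map]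

theorem fiberPolynomial_map {l : Type*} [CommRing l] [Algebra k l] [Algebra l A]
    [IsScalarTower k l A] (f : k[X]) (t : A) :
    fiberPolynomial (f.map (algebraMap k l)) t = fiberPolynomial f t := by
  simp [fiberPolynomial, Polynomial.map_map, ← IsScalarTower.algebraMap_eq]

theorem monic_fiberPolynomial [Nontrivial A] {f : k[X]} (hf : f.Monic) (h0 : f.natDegree ≠ 0)
    (t : A) : (fiberPolynomial f t).Monic := by
  refine (hf.map _).sub_of_left (degree_C_le.trans_lt ?_)
  rwa [hf.degree_map, ← natDegree_pos_iff_degree_pos, Nat.pos_iff_ne_zero]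

end CommRing

variable {k : Type*} [Field k]

theorem natDegree_fiberPolynomial {A : Type*} [CommRing A] [Nontrivial A] [Algebra k A] (f : k[X])
    (t : A) : (fiberPolynomial f t).natDegree = f.natDegree := by
  simp [fiberPolynomial]

/-- As a polynomial in two variables, `f(X) - T` is linear in `T`. -/
theorem irreducible_fiberPolynomial {f : k[X]} (h0 : f.natDegree ≠ 0) :
    Irreducible (fiberPolynomial f (RatFunc.X : RatFunc k)) := by
  have hirr : Irreducible (fiberPolynomial f (X : k[X])) := by
    have hswap : Bivariate.swap (fiberPolynomial f (X : k[X])) = -(X - C f) := by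
      rw [fiberPolynomial, map_sub, Bivariate.swap_X, algebraMap_eq, Bivariate.swap_map_C, neg_sub]
    rw [← MulEquiv.irreducible_iff (Bivariate.swap (R := k)), hswap]
    exact (Associated.refl _).neg_left.irreducible_iff.2 (irreducible_X_sub_C f)
  have hmap : (fiberPolynomial f (X : k[X])).map (algebraMap k[X] (RatFunc k)) =
      fiberPolynomial f RatFunc.X := by
    simpa using map_fiberPolynomial f (IsScalarTower.toAlgHom k k[X] (RatFunc k)) X
  rw [← hmap, ← (hirr.isPrimitive
    (by rwa [natDegree_fiberPolynomial])).irreducible_iff_irreducible_map_fraction_map]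
  exact hirr

theorem separable_fiberPolynomial {f : k[X]} (hf : f.derivative ≠ 0) :
    (fiberPolynomial f (RatFunc.X : RatFunc k)).Separable := by
  have h0 : f.natDegree ≠ 0 := fun h ↦ hf (derivative_of_natDegree_zero h)
  rwa [separable_iff_derivative_ne_zero (irreducible_fiberPolynomial h0),
    derivative_fiberPolynomial, Polynomial.map_ne_zero_iff (algebraMap k (RatFunc k)).injective]

end FiberPolynomial

section RatFuncHom

theorem exists_algHom_ratFunc_apply_X_eq {k L : Type*} [Field k] [Field L] [Algebra k L] {t : L}
    (ht : Transcendental k t) : ∃ φ : RatFunc k →ₐ[k] L, φ RatFunc.X = t :=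
  ⟨(adjoin k {t}).val.comp (RatFunc.algEquivOfTranscendental t ht).toAlgHom, by
    simp [RatFunc.algEquivOfTranscendental_apply]⟩

open scoped PowerSeries in
theorem transcendental_powerSeriesX {k : Type*} [CommRing k] :
    Transcendental k (PowerSeries.X : k⟦X⟧) := by
  have haeval : aeval (PowerSeries.X : k⟦X⟧) = coeToPowerSeries.algHom (R := k) k := by
    ext1
    simp
  rw [transcendental_iff_injective, haeval]
  intro p q hpq
  simpa using hpq

end RatFuncHom

section Constants

variable {k Ω : Type*} [Field k] [Field Ω] [Algebra k Ω] [Algebra (RatFunc k) Ω]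
  [IsScalarTower k (RatFunc k) Ω]

theorem algebraMap_ratFunc_mem_adjoin_X (r : RatFunc k) :
    algebraMap (RatFunc k) Ω r ∈ adjoin k {algebraMap (RatFunc k) Ω RatFunc.X} := by
  have hpoly (p : k[X]) : algebraMap (RatFunc k) Ω (algebraMap k[X] (RatFunc k) p) ∈
      adjoin k {algebraMap (RatFunc k) Ω RatFunc.X} := by
    rw [← aeval_X_left_apply p, ← aeval_algebraMap_apply, RatFunc.algebraMap_X,
      ← aeval_algebraMap_apply]
    exact algebra_adjoin_le_adjoin _ _ (aeval_mem_adjoin_singleton k _)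
  induction r using RatFunc.induction_on with
  | f p q _ => simpa only [map_div₀] using div_mem (hpoly p) (hpoly q)

theorem adjoin_integral_le_adjoin_X :
    (adjoin (RatFunc k) {z : Ω | IsIntegral k z}).toSubfield ≤
      (adjoin (algebraicClosure k Ω) {algebraMap (RatFunc k) Ω RatFunc.X}).toSubfield := by
  rw [adjoin_toSubfield, Subfield.closure_le]
  have hle : adjoin k {algebraMap (RatFunc k) Ω RatFunc.X} ≤
      (adjoin (algebraicClosure k Ω) {algebraMap (RatFunc k) Ω RatFunc.X}).restrictScalars k :=
    adjoin_le_iff.2 (subset_adjoin _ _)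
  rintro z (⟨r, rfl⟩ | hz)
  · exact hle (algebraMap_ratFunc_mem_adjoin_X r)
  · exact (adjoin (algebraicClosure k Ω) _).algebraMap_mem ⟨z, mem_algebraicClosure_iff'.2 hz⟩

theorem transcendental_algebraMap_X :
    Transcendental (algebraicClosure k Ω) (algebraMap (RatFunc k) Ω RatFunc.X) :=
  ((transcendental_algebraMap_iff (algebraMap (RatFunc k) Ω).injective).2
    RatFunc.transcendental_X).extendScalars _

theorem notMem_adjoin_integral_of_aeval_fiberPolynomial {f : k[X]} (hf : 1 < f.natDegree) {x : Ω}
    (hx : aeval x (fiberPolynomial f (RatFunc.X : RatFunc k)) = 0) :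
    x ∉ adjoin (RatFunc k) {z : Ω | IsIntegral k z} := by
  intro hxD
  obtain ⟨φ, hφX⟩ :=
    exists_algHom_ratFunc_apply_X_eq (transcendental_algebraMap_X (k := k) (Ω := Ω))
  have hrange : adjoin (algebraicClosure k Ω) {algebraMap (RatFunc k) Ω RatFunc.X} ≤
      φ.fieldRange := adjoin_simple_le_iff.2 ⟨RatFunc.X, hφX⟩
  obtain ⟨y, rfl⟩ : ∃ y, φ y = x := hrange (adjoin_integral_le_adjoin_X hxD)
  let f' := f.map (algebraMap k (algebraicClosure k Ω))
  have hy : (fiberPolynomial f' RatFunc.X).IsRoot y := by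
    rw [aeval_fiberPolynomial] at hx
    refine IsRoot.of_map (f := (φ : _ →+* Ω)) ?_ φ.injective
    rw [map_fiberPolynomial, IsRoot, eval_fiberPolynomial, aeval_map_algebraMap, hφX]
    exact hx
  have hdeg := degree_eq_one_of_irreducible_of_root
    (irreducible_fiberPolynomial (f := f') (by rw [natDegree_map]; lia)) hy
  rw [← Nat.cast_one, degree_eq_iff_natDegree_eq_of_pos one_pos, natDegree_fiberPolynomial,
    natDegree_map] at hdeg
  exact hf.ne' hdeg

end Constants

section PowerSeriesRoots

variable {k : Type*} [Field k] {f : k[X]}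

open scoped PowerSeries

theorem constantCoeff_aeval {R : Type*} [CommRing R] (f : R[X]) (u : R⟦X⟧) :
    PowerSeries.constantCoeff (aeval u f) = f.eval (PowerSeries.constantCoeff u) := by
  rw [aeval_def, hom_eval₂, eval]
  congr 1

theorem constantCoeff_eval_derivative_fiberPolynomial {R : Type*} [CommRing R] (f : R[X])
    (t u : R⟦X⟧) :
    PowerSeries.constantCoeff ((fiberPolynomial f t).derivative.eval u) =
      f.derivative.eval (PowerSeries.constantCoeff u) := by
  rw [derivative_fiberPolynomial, eval_map_algebraMap, constantCoeff_aeval]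

/-- Differentiating `f(u) = X` gives `f'(u) * u' = 1`, so that `f'(u)` is a unit. -/
theorem isSimpleRoot_constantCoeff {u : k⟦X⟧}
    (hu : (fiberPolynomial f PowerSeries.X).IsRoot u) :
    f.IsRoot (PowerSeries.constantCoeff u) ∧
      f.derivative.eval (PowerSeries.constantCoeff u) ≠ 0 := by
  rw [IsRoot, eval_fiberPolynomial, sub_eq_zero] at hu
  have hderiv : aeval u f.derivative * PowerSeries.derivative k u = 1 := by
    rw [← smul_eq_mul, ← Derivation.map_aeval, hu, PowerSeries.derivative_X]
  have hconst := congrArg PowerSeries.constantCoeff hderiv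
  rw [map_mul, constantCoeff_aeval, map_one] at hconst
  refine ⟨?_, left_ne_zero_of_mul_eq_one hconst⟩
  rw [IsRoot, ← constantCoeff_aeval, hu, PowerSeries.constantCoeff_X]

theorem injOn_constantCoeff_roots :
    Set.InjOn PowerSeries.constantCoeff
      {u | (fiberPolynomial f (PowerSeries.X : k⟦X⟧)).IsRoot u} := by
  intro u hu v hv huv
  refine IsLocalRing.eq_of_eval_eq_zero_of_not_isUnit_sub hu hv ?_ ?_
  · simp [PowerSeries.isUnit_iff_constantCoeff, huv]
  · rw [PowerSeries.isUnit_iff_constantCoeff, constantCoeff_eval_derivative_fiberPolynomial]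
    exact (isSimpleRoot_constantCoeff hu).2.isUnit

theorem exists_isRoot_constantCoeff_eq (hf : f.Monic) {a : k} (ha : f.IsRoot a)
    (ha' : f.derivative.eval a ≠ 0) :
    ∃ u, (fiberPolynomial f PowerSeries.X).IsRoot u ∧ PowerSeries.constantCoeff u = a := by
  have h0 : f.natDegree ≠ 0 := fun h ↦ ha' (by simp [derivative_of_natDegree_zero h])
  have hroot : (fiberPolynomial f PowerSeries.X).eval (PowerSeries.C a) ∈
      Ideal.span {(PowerSeries.X : k⟦X⟧)} := by
    rw [Ideal.mem_span_singleton, PowerSeries.X_dvd_iff, eval_fiberPolynomial, map_sub,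
      constantCoeff_aeval]
    simpa using ha
  have hunit : IsUnit ((fiberPolynomial f (PowerSeries.X : k⟦X⟧)).derivative.eval
      (PowerSeries.C a)) := by
    rw [PowerSeries.isUnit_iff_constantCoeff, constantCoeff_eval_derivative_fiberPolynomial]
    simpa using ha'
  obtain ⟨u, hu, hua⟩ := HenselianRing.is_henselian (fiberPolynomial f PowerSeries.X)
    (monic_fiberPolynomial hf h0 _) (PowerSeries.C a) hroot (hunit.map _)
  refine ⟨u, hu, ?_⟩
  rw [Ideal.mem_span_singleton, PowerSeries.X_dvd_iff, map_sub, sub_eq_zero] at hua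
  simpa using hua

theorem ncard_roots_powerSeries (hf : f.Monic) :
    {u | (fiberPolynomial f (PowerSeries.X : k⟦X⟧)).IsRoot u}.ncard =
      {a | f.IsRoot a ∧ f.derivative.eval a ≠ 0}.ncard := by
  rw [← injOn_constantCoeff_roots.ncard_image]
  congr 1
  ext a
  constructor
  · rintro ⟨u, hu, rfl⟩
    exact isSimpleRoot_constantCoeff hu
  · rintro ⟨ha, ha'⟩
    exact exists_isRoot_constantCoeff_eq hf ha ha'

end PowerSeriesRoots

section FractionField

open scoped PowerSeries

variable {k : Type*} [Field k] {f : k[X]} (L : Type*) [Field L] [Algebra k⟦X⟧ L]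
  [IsFractionRing k⟦X⟧ L] [Algebra k L] [IsScalarTower k k⟦X⟧ L]

theorem ncard_rootSet_fiberPolynomial_powerSeriesX (hf : f.Monic) (h0 : f.natDegree ≠ 0) :
    ((fiberPolynomial f (algebraMap k⟦X⟧ L PowerSeries.X)).rootSet L).ncard =
      {a | f.IsRoot a ∧ f.derivative.eval a ≠ 0}.ncard := by
  have hinj := IsFractionRing.injective k⟦X⟧ L
  have hmap : (fiberPolynomial f (PowerSeries.X : k⟦X⟧)).map (algebraMap k⟦X⟧ L) =
      fiberPolynomial f (algebraMap k⟦X⟧ L PowerSeries.X) :=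
    map_fiberPolynomial f (IsScalarTower.toAlgHom k k⟦X⟧ L) _
  have hq := monic_fiberPolynomial hf h0 (PowerSeries.X : k⟦X⟧)
  rw [← ncard_roots_powerSeries hf, ← Set.ncard_image_of_injective _ hinj, ← hmap]
  congr 1
  ext u
  rw [mem_rootSet_of_ne (hq.map _).ne_zero, coe_aeval_eq_eval]
  constructor
  · intro hu
    have hint : IsIntegral k⟦X⟧ u := ⟨_, hq, by rwa [← eval_map]⟩
    obtain ⟨w, rfl⟩ := IsIntegrallyClosed.isIntegral_iff.1 hint
    exact ⟨w, IsRoot.of_map hu hinj, rfl⟩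
  · rintro ⟨w, hw, rfl⟩
    exact IsRoot.map hw

end FractionField

section GaloisSwap

variable {K L A : Type*} [Field K] [Field L] [Field A] [Algebra K L] [Algebra K A] [Algebra L A]
  [IsScalarTower K L A] {q : K[X]}

theorem exists_algEquiv_apply_ne [Normal L A] (hq : q.Separable) {x : A} (hx : aeval x q = 0)
    (hxL : x ∉ Set.range (algebraMap L A)) : ∃ σ : A ≃ₐ[L] A, σ x ≠ x := by
  have hsep : IsSeparable L x :=
    (hq.map (f := algebraMap K L)).of_dvd (minpoly.dvd _ _ (by rwa [aeval_map_algebraMap]))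
  obtain ⟨y, hyx, hxy⟩ := (notMem_iff_exists_ne_and_isConjRoot hsep
    (Normal.splits inferInstance x)).1 (by rwa [Algebra.mem_bot])
  obtain ⟨σ, hσ⟩ := hxy.symm.exists_algEquiv
  exact ⟨σ, hσ ▸ hyx.symm⟩

variable [Fact (q.map (algebraMap K A)).Splits]

theorem ncard_roots_notMem_range_add (hq : q.Separable) :
    {x : q.rootSet A | (x : A) ∉ Set.range (algebraMap L A)}.ncard + (q.rootSet L).ncard =
      q.natDegree := by
  have himage : ((↑) : q.rootSet A → A) '' {x | (x : A) ∈ Set.range (algebraMap L A)} =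
      algebraMap L A '' q.rootSet L := by
    ext x
    simp only [Set.mem_image, Set.mem_ofPred_eq, Subtype.exists, mem_rootSet, ne_eq, hq.ne_zero]
    constructor
    · rintro ⟨-, hx, ⟨y, rfl⟩, rfl⟩
      exact ⟨y, by simpa [aeval_algebraMap_apply] using hx, rfl⟩
    · rintro ⟨y, hy, rfl⟩
      exact ⟨_, by simpa [aeval_algebraMap_apply] using hy, ⟨y, rfl⟩, rfl⟩
  rw [← Set.ncard_image_of_injective (q.rootSet L) (algebraMap L A).injective, ← himage,
    Set.ncard_image_of_injective _ Subtype.val_injective, add_comm,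
    ← card_rootSet_eq_natDegree hq (Fact.out : (q.map (algebraMap K A)).Splits),
    ← Nat.card_eq_fintype_card]
  exact Set.ncard_add_ncard_compl _

open scoped Classical in
/-- An automorphism over `L` fixes the roots in `L`, so it can only swap the other two. -/
theorem exists_galActionHom_isSwap [Normal L A] (hq : q.Separable)
    (hcard : (q.rootSet L).ncard + 2 = q.natDegree) :
    ∃ g : q.Gal, (Gal.galActionHom q A g).IsSwap := by
  have hncard : {x : q.rootSet A | (x : A) ∉ Set.range (algebraMap L A)}.ncard = 2 := by
    have := ncard_roots_notMem_range_add (L := L) (A := A) hq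
    lia
  obtain ⟨x, hxL⟩ := Set.nonempty_of_ncard_ne_zero (hncard.trans_ne two_ne_zero)
  obtain ⟨σ, hσ⟩ := exists_algEquiv_apply_ne hq (mem_rootSet.1 x.2).2 hxL
  let g := Gal.restrict q A (σ.restrictScalars K)
  have hg (y : q.rootSet A) : (Gal.galActionHom q A g y : A) = σ y :=
    Gal.galActionHom_restrict q A _ y
  have hne : Gal.galActionHom q A g ≠ 1 := fun h ↦ hσ (by rw [← hg, h, Equiv.Perm.one_apply])
  refine ⟨g, Equiv.Perm.card_support_eq_two.1 (le_antisymm ?_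
    (Equiv.Perm.two_le_card_support_of_ne_one hne))⟩
  rw [← hncard, ← Set.ncard_coe_finset]
  refine Set.ncard_le_ncard fun y hy ↦ ?_
  rintro ⟨z, hz⟩
  refine Equiv.Perm.mem_support.1 hy (Subtype.ext ?_)
  rw [hg, ← hz, σ.commutes]

theorem galActionHom_bijective_of_isSwap (hirr : Irreducible q) (hsep : q.Separable)
    (hprime : q.natDegree.Prime) {g : q.Gal} [DecidableEq (q.rootSet A)]
    (hg : (Gal.galActionHom q A g).IsSwap) :
    Function.Bijective (Gal.galActionHom q A) := by
  classical
  refine ⟨Gal.galActionHom_injective q A, MonoidHom.range_eq_top.1 ?_⟩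
  have hpre : MulAction.IsPretransitive (Gal.galActionHom q A).range (q.rootSet A) := by
    refine ⟨fun x y ↦ ?_⟩
    obtain ⟨g, hg⟩ := (Gal.galAction_isPretransitive (p := q) (E := A) hirr).exists_smul_eq x y
    exact ⟨⟨_, g, rfl⟩, hg⟩
  refine Equiv.Perm.subgroup_eq_top_of_isPreprimitive_of_isSwap_mem ?_ _ hg ⟨g, rfl⟩
  refine MulAction.IsPreprimitive.of_prime_card ?_
  rwa [Nat.card_eq_fintype_card, card_rootSet_eq_natDegree hsep Fact.out]

theorem nonempty_gal_mulEquiv_perm (hirr : Irreducible q) (hsep : q.Separable)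
    (hprime : q.natDegree.Prime) (hcard : (q.rootSet L).ncard + 2 = q.natDegree) :
    Nonempty (q.Gal ≃* Equiv.Perm (Fin q.natDegree)) := by
  classical
  let A := AlgebraicClosure L
  have : Fact (q.map (algebraMap K A)).Splits := ⟨IsAlgClosed.splits _⟩
  obtain ⟨g, hg⟩ := exists_galActionHom_isSwap (L := L) (A := A) hsep hcard
  let e : q.rootSet A ≃ Fin q.natDegree :=
    Fintype.equivFinOfCardEq (card_rootSet_eq_natDegree hsep Fact.out)
  exact ⟨(MulEquiv.ofBijective _ (galActionHom_bijective_of_isSwap hirr hsep hprime hg)).trans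
    e.permCongrHom⟩

end GaloisSwap

section Trinomial

open scoped PowerSeries

variable {k : Type*} [Field k]

theorem nonempty_gal_fiberPolynomial_mulEquiv_perm (C : Type*) [Field C] [Algebra k C] {f : k[X]}
    (hf : f.Monic) (hprime : f.natDegree.Prime) (hderiv : f.derivative ≠ 0)
    (hcard : {a : C | aeval a f = 0 ∧ aeval a f.derivative ≠ 0}.ncard + 2 = f.natDegree) :
    Nonempty ((fiberPolynomial f (RatFunc.X : RatFunc k)).Gal ≃* Equiv.Perm (Fin f.natDegree)) := by
  let L := FractionRing C⟦X⟧
  have hX : Transcendental k (algebraMap C⟦X⟧ L PowerSeries.X) :=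
    ((transcendental_algebraMap_iff (IsFractionRing.injective C⟦X⟧ L)).2
      transcendental_powerSeriesX).restrictScalars (algebraMap k C).injective
  obtain ⟨φ, hφ⟩ := exists_algHom_ratFunc_apply_X_eq hX
  let : Algebra (RatFunc k) L := φ.toRingHom.toAlgebra
  have hroots : (fiberPolynomial f (RatFunc.X : RatFunc k)).rootSet L =
      (fiberPolynomial (f.map (algebraMap k C)) (algebraMap C⟦X⟧ L PowerSeries.X)).rootSet L := by
    have hmap : (fiberPolynomial f (RatFunc.X : RatFunc k)).map (algebraMap (RatFunc k) L) = _ :=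
      map_fiberPolynomial f φ RatFunc.X
    have := aroots_map L L (fiberPolynomial f (RatFunc.X : RatFunc k))
    rw [fiberPolynomial_map, ← hφ, ← hmap, rootSet, rootSet, this]
  have h0 : f.natDegree ≠ 0 := hprime.ne_zero
  rw [← natDegree_fiberPolynomial f (RatFunc.X : RatFunc k)] at hprime hcard ⊢
  refine nonempty_gal_mulEquiv_perm (L := L) (irreducible_fiberPolynomial h0)
    (separable_fiberPolynomial hderiv) hprime ?_
  rw [hroots, ncard_rootSet_fiberPolynomial_powerSeriesX L (hf.map _) (by rwa [natDegree_map]),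
    ← hcard]
  simp only [IsRoot, derivative_map, eval_map_algebraMap]

theorem monic_X_pow_sub_X_sq {R : Type*} [CommRing R] [Nontrivial R] {n : ℕ} (hn : n ≠ 0) :
    (X ^ (n + 2) - X ^ 2 : R[X]).Monic :=
  monic_X_pow_sub (by rw [degree_X_pow]; exact_mod_cast (by lia : 2 < n + 2))

theorem natDegree_X_pow_sub_X_sq {R : Type*} [CommRing R] [Nontrivial R] {n : ℕ}
    (hn : n ≠ 0) : (X ^ (n + 2) - X ^ 2 : R[X]).natDegree = n + 2 := by
  rw [natDegree_sub_eq_left_of_natDegree_lt, natDegree_X_pow]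
  simp only [natDegree_X_pow]
  lia

theorem derivative_X_pow_sub_X_sq_ne_zero {R : Type*} [CommRing R] {n : ℕ} (hn : (n : R) ≠ 0) :
    (X ^ (n + 2) - X ^ 2 : R[X]).derivative ≠ 0 := by
  have heval : (X ^ (n + 2) - X ^ 2 : R[X]).derivative.eval 1 = n := by
    simp
  exact fun h ↦ hn (by rw [← heval, h, eval_zero])

theorem ncard_pow_eq_one {C : Type*} [Field C] [IsAlgClosed C] {n : ℕ} (hn : (n : C) ≠ 0) :
    {a : C | a ^ n = 1}.ncard = n := by
  have : NeZero (n : C) := ⟨hn⟩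
  have : NeZero n := ⟨fun h ↦ hn (by simp [h])⟩
  obtain ⟨ζ, hζ⟩ := HasEnoughRootsOfUnity.exists_primitiveRoot C n
  have hroots : {a : C | a ^ n = 1} = nthRootsFinset n (1 : C) := by
    ext a
    simp [mem_nthRootsFinset (NeZero.pos n)]
  rw [hroots, Set.ncard_coe_finset, hζ.card_nthRootsFinset]

theorem simpleRoots_X_pow_sub_X_sq {n : ℕ} (C : Type*) [Field C] [Algebra k C] (hn : (n : k) ≠ 0) :
    {a : C | aeval a (X ^ (n + 2) - X ^ 2 : k[X]) = 0 ∧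
      aeval a (X ^ (n + 2) - X ^ 2 : k[X]).derivative ≠ 0} = {a | a ^ n = 1} := by
  have hnC : (n : C) ≠ 0 := by
    rwa [← map_natCast (algebraMap k C), _root_.map_ne_zero]
  have hn0 : n ≠ 0 := fun h ↦ hn (by simp [h])
  ext a
  have hroot : aeval a (X ^ (n + 2) - X ^ 2 : k[X]) = a ^ 2 * (a ^ n - 1) := by
    simp only [map_sub, map_pow, aeval_X]
    ring
  have hderiv : aeval a (X ^ (n + 2) - X ^ 2 : k[X]).derivative =
      a * ((n + 2) * (a ^ n - 1) + n) := by
    simp only [derivative_sub, derivative_X_pow_succ, Nat.cast_add, Nat.cast_one, map_add,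
      map_natCast, map_one, pow_one, aeval_sub, map_mul, map_pow, aeval_X]
    ring
  simp only [Set.mem_ofPred_eq, hroot, hderiv]
  constructor
  · rintro ⟨h, h'⟩
    exact sub_eq_zero.1 ((mul_eq_zero.1 h).resolve_left (pow_ne_zero 2 (left_ne_zero_of_mul h')))
  · intro h
    have ha : a ≠ 0 := by
      rintro rfl
      simp [hn0] at h
    simp [h, ha, hnC]

theorem nonempty_gal_trinomial_mulEquiv_perm {n : ℕ} (hn : (n : k) ≠ 0) (hp : (n + 2).Prime) :
    Nonempty ((fiberPolynomial (X ^ (n + 2) - X ^ 2 : k[X]) (RatFunc.X : RatFunc k)).Gal ≃*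
      Equiv.Perm (Fin (n + 2))) := by
  have hn0 : n ≠ 0 := fun h ↦ hn (by simp [h])
  have hdeg := natDegree_X_pow_sub_X_sq (R := k) hn0
  have hnC : (n : AlgebraicClosure k) ≠ 0 := by
    rwa [← map_natCast (algebraMap k (AlgebraicClosure k)), _root_.map_ne_zero]
  have hgal := nonempty_gal_fiberPolynomial_mulEquiv_perm (AlgebraicClosure k)
    (monic_X_pow_sub_X_sq hn0) (by rwa [hdeg])
    (derivative_X_pow_sub_X_sq_ne_zero hn)
    (by rw [simpleRoots_X_pow_sub_X_sq _ hn, ncard_pow_eq_one hnC, hdeg])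
  rwa [hdeg] at hgal

theorem exists_gt_prime_add_two_natCast_ne_zero (k : Type*) [Field k] (N : ℕ) :
    ∃ n > N, (n + 2).Prime ∧ (n : k) ≠ 0 := by
  rcases CharP.exists k with ⟨ℓ, hℓ⟩
  rcases eq_or_ne ℓ 0 with rfl | h
  · have := CharP.charP_to_charZero k
    obtain ⟨p, hN, hp⟩ := Nat.exists_infinite_primes (N + 3)
    refine ⟨p - 2, by lia, by rwa [Nat.sub_add_cancel hp.two_le], Nat.cast_ne_zero.2 (by lia)⟩
  · obtain ⟨p, hp, hN, hmod⟩ := Nat.exists_prime_gt_modEq_one (N + 2) h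
    refine ⟨p - 2, by lia, by rwa [Nat.sub_add_cancel hp.two_le], ?_⟩
    have hp1 : (p : k) = 1 := by simpa using (CharP.natCast_eq_natCast k ℓ).2 hmod
    rw [Nat.cast_sub hp.two_le, hp1]
    norm_num

end Trinomial

section GaloisCorrespondence

variable {K F : Type*} [Field K] [Field F] [Algebra K F]

open scoped Pointwise in
theorem mem_normalizer_fixingSubgroup_iff [IsGalois K F] (E : IntermediateField K F)
    (σ : F ≃ₐ[K] F) :
    σ ∈ Subgroup.normalizer (E.fixingSubgroup : Set (F ≃ₐ[K] F)) ↔ E.map σ.toAlgHom = E := by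
  rw [Subgroup.mem_normalizer_iff_map_conj_eq]
  change MulAut.conj σ • E.fixingSubgroup = E.fixingSubgroup ↔ _
  rw [← IsGalois.map_fixingSubgroup]
  refine ⟨fun h ↦ ?_, fun h ↦ by rw [h]⟩
  rw [← InfiniteGalois.fixedField_fixingSubgroup (E.map _), h,
    InfiniteGalois.fixedField_fixingSubgroup]

/-- Restriction of automorphisms to an intermediate field `E`, defined on the normalizer of the
subgroup fixing `E`: these are the automorphisms mapping `E` onto itself. -/
noncomputable def restrictNormalizerHom [IsGalois K F] (E : IntermediateField K F) :
    Subgroup.normalizer (E.fixingSubgroup : Set (F ≃ₐ[K] F)) →* (E ≃ₐ[K] E) where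
  toFun σ := (intermediateFieldMap σ.1 E).trans
    (equivOfEq ((mem_normalizer_fixingSubgroup_iff E σ.1).1 σ.2))
  map_one' := rfl
  map_mul' _ _ := rfl

theorem coe_restrictNormalizerHom_apply [IsGalois K F] (E : IntermediateField K F)
    (σ : Subgroup.normalizer (E.fixingSubgroup : Set (F ≃ₐ[K] F))) (x : E) :
    (restrictNormalizerHom E σ x : F) = σ.1 x :=
  rfl

theorem ker_restrictNormalizerHom [IsGalois K F] (E : IntermediateField K F) :
    (restrictNormalizerHom E).ker = E.fixingSubgroup.subgroupOf (Subgroup.normalizer _) := by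
  ext σ
  rw [MonoidHom.mem_ker, Subgroup.mem_subgroupOf, IntermediateField.mem_fixingSubgroup_iff]
  simp only [AlgEquiv.ext_iff, Subtype.forall, Subtype.ext_iff, coe_restrictNormalizerHom_apply,
    AlgEquiv.one_apply]

theorem restrictNormalizerHom_surjective [IsGalois K F] (E : IntermediateField K F) :
    Function.Surjective (restrictNormalizerHom E) := by
  intro τ
  have hτ (x : E) : τ.liftNormal F x = τ x := AlgEquiv.liftNormal_commutes τ F x
  have hmap : E.map (τ.liftNormal F).toAlgHom = E := by
    ext y
    constructor
    · rintro ⟨x, hx, rfl⟩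
      exact (hτ ⟨x, hx⟩).symm ▸ (τ ⟨x, hx⟩).2
    · intro hy
      exact ⟨τ.symm ⟨y, hy⟩, (τ.symm ⟨y, hy⟩).2, by simp [hτ]⟩
  refine ⟨⟨τ.liftNormal F, (mem_normalizer_fixingSubgroup_iff E _).2 hmap⟩, ?_⟩
  ext x
  exact hτ x

/-- The automorphism group of `E` over `K` is the normalizer of the group `fixingSubgroup E` modulo
that group. -/
noncomputable def normalizerQuotientEquivAut [IsGalois K F] (E : IntermediateField K F) :
    Subgroup.normalizer (E.fixingSubgroup : Set (F ≃ₐ[K] F)) ⧸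
      E.fixingSubgroup.subgroupOf (Subgroup.normalizer _) ≃* (E ≃ₐ[K] E) :=
  (QuotientGroup.quotientMulEquivOfEq (ker_restrictNormalizerHom E).symm).trans
    (QuotientGroup.quotientKerEquivOfSurjective _ (restrictNormalizerHom_surjective E))

theorem eq_top_of_normalCore_fixingSubgroup_eq_bot [IsGalois K F] {E D : IntermediateField K F}
    [Normal K D] (hcore : E.fixingSubgroup.normalCore = ⊥) (hED : E ≤ D) : D = ⊤ := by
  have : IsGalois K D := ⟨⟩
  have hD : D.fixingSubgroup = ⊥ := by
    rw [eq_bot_iff, ← hcore, Subgroup.normal_le_normalCore]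
    exact fixingSubgroup_le hED
  rw [← InfiniteGalois.fixedField_fixingSubgroup D, hD, fixedField_bot]

variable {Ω : Type*} [Field Ω] [Algebra K Ω]

theorem normal_comap_val [Normal K Ω] (F D : IntermediateField K Ω) [Normal K F] [Normal K D] :
    Normal K (D.comap F.val) := by
  rw [normal_iff_forall_map_le]
  rintro σ _ ⟨x, hx, rfl⟩
  change algebraMap F Ω (σ x) ∈ D
  rw [← σ.liftNormal_commutes Ω x]
  exact normal_iff_forall_map_le.1 ‹Normal K D› (σ.liftNormal Ω) ⟨x, hx, rfl⟩

theorem le_of_lift_le_of_normalCore_fixingSubgroup_eq_bot [Normal K Ω]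
    (F D : IntermediateField K Ω) [IsGalois K F] [Normal K D] (E : IntermediateField K F)
    (hcore : E.fixingSubgroup.normalCore = ⊥) (hED : lift E ≤ D) : F ≤ D := by
  have := normal_comap_val F D
  have htop : D.comap F.val = ⊤ :=
    eq_top_of_normalCore_fixingSubgroup_eq_bot hcore fun x hx ↦ hED ((mem_lift x).2 hx)
  intro x hx
  exact (htop ▸ mem_top : (⟨x, hx⟩ : F) ∈ D.comap F.val)

theorem two_le_finrank_extendScalars_sup {E D : IntermediateField K Ω} [FiniteDimensional K E]
    (h : ¬ E ≤ D) : 2 ≤ Module.finrank D (extendScalars (le_sup_right : D ≤ E ⊔ D)) := by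
  have hadjoin : extendScalars (le_sup_right : D ≤ E ⊔ D) = adjoin D (E : Set Ω) := by
    apply restrictScalars_injective K
    rw [extendScalars_restrictScalars, restrictScalars_adjoin_eq_sup, adjoin_self, sup_comm]
  have hfin : FiniteDimensional D (extendScalars (le_sup_right : D ≤ E ⊔ D)) := by
    rw [hadjoin, FiniteDimensional, ← Module.rank_lt_aleph0_iff]
    exact (adjoin_rank_le_of_isAlgebraic_right D E).trans_lt (Module.rank_lt_aleph0 K E)
  have hne : Module.finrank D (extendScalars (le_sup_right : D ≤ E ⊔ D)) ≠ 1 := by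
    rw [← relfinrank_eq_finrank_of_le, Ne, relfinrank_eq_one_iff, sup_le_iff]
    exact fun hle ↦ h hle.1
  have hpos := Module.finrank_pos (R := D) (M := extendScalars (le_sup_right : D ≤ E ⊔ D))
  omega

end GaloisCorrespondence

theorem normal_adjoin_isIntegral {k K Ω : Type*} [CommRing k] [Field K] [Field Ω]
    [Algebra k K] [Algebra K Ω] [Algebra k Ω] [IsScalarTower k K Ω] [Normal K Ω] :
    Normal K (adjoin K {z : Ω | IsIntegral k z}) := by
  rw [normal_iff_forall_map_le]
  intro σ
  rw [adjoin_map]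
  apply adjoin.mono
  rintro _ ⟨z, hz, rfl⟩
  exact IsIntegral.map (σ.restrictScalars k) hz

section NormalizerQuotient

variable {G P Q X : Type*} [Group G] [Group P] [Group Q]

/-- `P` has a subgroup `H` with trivial normal core such that `N_P(H) / H` is isomorphic to `G`. By
Galois theory this means that an extension with Galois group `P` is the normal closure of a
subextension with automorphism group `G`. -/
def HasCoreFreeNormalizerQuotient (P G : Type*) [Group P] [Group G] : Prop :=
  ∃ H : Subgroup P, H.normalCore = ⊥ ∧
    Nonempty (Subgroup.normalizer (H : Set P) ⧸ H.subgroupOf (Subgroup.normalizer H) ≃* G)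

theorem HasCoreFreeNormalizerQuotient.congr_left (e : P ≃* Q)
    (hP : HasCoreFreeNormalizerQuotient P G) : HasCoreFreeNormalizerQuotient Q G := by
  obtain ⟨H, hcore, ⟨φ⟩⟩ := hP
  let f : P →* Q := e
  have hf : Function.Bijective f := e.bijective
  let eN : Subgroup.normalizer (H : Set P) ≃* Subgroup.normalizer (H.map f : Set Q) :=
    (e.subgroupMap _).trans (MulEquiv.subgroupCongr (H.map_normalizer_eq_of_bijective hf))
  have heN : (H.subgroupOf (Subgroup.normalizer H)).map eN.toMonoidHom =
      (H.map f).subgroupOf (Subgroup.normalizer _) := by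
    ext x
    refine Subgroup.mem_map_equiv.trans ?_
    exact (Subgroup.mem_map_equiv (f := e) (x := x.1)).symm
  refine ⟨H.map f, ?_, ⟨(QuotientGroup.congr _ _ eN heN).symm.trans φ⟩⟩
  have hle : (H.map f).normalCore.comap f ≤ H.normalCore := by
    rw [Subgroup.normal_le_normalCore]
    exact (Subgroup.comap_mono (Subgroup.normalCore_le _)).trans
      (Subgroup.comap_map_eq_self_of_injective hf.1 H).le
  rw [hcore, le_bot_iff] at hle
  rw [← Subgroup.map_comap_eq_self_of_surjective hf.2 (H.map f).normalCore, hle, Subgroup.map_bot]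

theorem map_mem_normalizer_of_forall_conj_mem {H : Subgroup P} {γ : G →* P}
    (hγ : ∀ g, ∀ σ ∈ H, γ g * σ * (γ g)⁻¹ ∈ H) (g : G) :
    γ g ∈ Subgroup.normalizer (H : Set P) := by
  refine Subgroup.mem_normalizer_iff.2 fun σ ↦ ⟨hγ g σ, fun hσ ↦ ?_⟩
  simpa [mul_assoc] using hγ g⁻¹ _ hσ

theorem nonempty_normalizer_quotient_mulEquiv {H : Subgroup P} (γ : G →* P)
    (hγ : ∀ g, γ g ∈ Subgroup.normalizer (H : Set P)) (hinj : ∀ g, γ g ∈ H → g = 1)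
    (hsurj : ∀ σ ∈ Subgroup.normalizer (H : Set P), ∃ g, (γ g)⁻¹ * σ ∈ H) :
    Nonempty (Subgroup.normalizer (H : Set P) ⧸ H.subgroupOf (Subgroup.normalizer H) ≃* G) := by
  let φ := (QuotientGroup.mk' (H.subgroupOf (Subgroup.normalizer H))).comp (γ.codRestrict _ hγ)
  have hφ : Function.Bijective φ := by
    constructor
    · rw [injective_iff_map_eq_one]
      intro g hg
      exact hinj g ((QuotientGroup.eq_one_iff (⟨γ g, hγ g⟩ : Subgroup.normalizer _)).1 hg)
    · rintro ⟨σ, hσ⟩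
      obtain ⟨g, hg⟩ := hsurj σ hσ
      exact ⟨g, QuotientGroup.eq.2 hg⟩
  exact ⟨(MulEquiv.ofBijective φ hφ).symm⟩

open MulAction

theorem normalCore_eq_bot_of_not_isPretransitive {H : Subgroup (Equiv.Perm X)}
    (hH : ¬ IsPretransitive H X) : H.normalCore = ⊥ := by
  by_contra hne
  have hfix : fixedPoints H.normalCore X ≠ Set.univ := by
    contrapose hne
    rw [Subgroup.eq_bot_iff_forall]
    exact fun σ hσ ↦ Equiv.ext fun x ↦ (hne ▸ Set.mem_univ x : x ∈ fixedPoints _ X) ⟨σ, hσ⟩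
  have htrans := IsQuasiPreprimitive.isPretransitive_of_normal hfix
  refine hH ⟨fun x y ↦ ?_⟩
  obtain ⟨⟨σ, hσ⟩, h⟩ := htrans.exists_smul_eq x y
  exact ⟨⟨σ, H.normalCore_le hσ⟩, h⟩

variable {A : Type*} [Group A] [MulAction A X] {σ : Equiv.Perm X}

theorem exists_forall_apply_smul_of_mem_normalizer_range
    (hσ : σ ∈ Subgroup.normalizer ((toPermHom A X).range : Set (Equiv.Perm X))) (a : A) :
    ∃ a' : A, ∀ x, σ (a • x) = a' • σ x := by
  obtain ⟨a', ha'⟩ := (Subgroup.mem_normalizer_iff.1 hσ _).1 ⟨a, rfl⟩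
  refine ⟨a', fun x ↦ ?_⟩
  simpa using (Equiv.congr_fun ha' (σ x)).symm

theorem ncard_orbit_apply_of_mem_normalizer_range
    (hσ : σ ∈ Subgroup.normalizer ((toPermHom A X).range : Set (Equiv.Perm X))) (x : X) :
    (orbit A (σ x)).ncard = (orbit A x).ncard := by
  have himage (τ) (hτ : τ ∈ Subgroup.normalizer ((toPermHom A X).range : Set (Equiv.Perm X)))
      (y : X) : τ '' orbit A y ⊆ orbit A (τ y) := by
    rintro _ ⟨_, ⟨a, rfl⟩, rfl⟩
    obtain ⟨a', ha'⟩ := exists_forall_apply_smul_of_mem_normalizer_range hτ a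
    exact ⟨a', (ha' y).symm⟩
  rw [← Set.ncard_image_of_injective (orbit A x) σ.injective]
  refine congrArg _ ((himage σ hσ x).antisymm fun y hy ↦ ⟨σ⁻¹ y, ?_, by simp⟩).symm
  simpa using himage σ⁻¹ (inv_mem hσ) (σ x) ⟨y, hy, rfl⟩

end NormalizerQuotient

section ColoredFamilies

open MulAction
open scoped Pointwise

theorem finset_eq_of_stabilizer_le_stabilizer {B : Type*} [Fintype B] [DecidableEq B]
    {S T : Finset B} (hS : 2 * S.card < Fintype.card B) (hT : 2 * T.card < Fintype.card B)
    (hne : T.Nonempty)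
    (h : stabilizer (Equiv.Perm B) S ≤ stabilizer (Equiv.Perm B) T) : T = S := by
  have hmove (y z) (hy : y ∈ T) (hyz : y ∈ S ↔ z ∈ S) : z ∈ T := by
    have hswap : Equiv.swap y z ∈ stabilizer (Equiv.Perm B) S := by
      ext w
      rw [← Finset.inv_smul_mem_iff, Equiv.swap_inv, Equiv.Perm.smul_def, Equiv.swap_apply_def]
      split_ifs <;> simp_all
    rw [← mem_stabilizer_iff.1 (h hswap)]
    exact Finset.mem_smul_finset.2 ⟨y, hy, Equiv.swap_apply_left y z⟩
  have hTS : T ⊆ S := by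
    intro y hy
    by_contra hyS
    have hcompl : Sᶜ ⊆ T := fun z hz ↦ hmove y z hy (by simp_all)
    have hcard := Finset.card_le_card hcompl
    rw [Finset.card_compl] at hcard
    omega
  obtain ⟨y, hy⟩ := hne
  exact hTS.antisymm fun z hz ↦ hmove y z hy (by simp [hTS hy, hz])

theorem lt_choose_of_two_le {m d : ℕ} (hd : 2 ≤ d) (hdm : 2 * d < m) : m < m.choose d := by
  induction d, hd using Nat.le_induction with
  | base =>
    rw [Nat.choose_two_right, Nat.lt_div_iff_mul_lt' (Nat.even_mul_pred_self m).two_dvd]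
    exact Nat.mul_comm 2 m ▸ Nat.mul_lt_mul_of_pos_left (by omega) (by omega)
  | succ d _ ih =>
    exact (ih (by omega)).trans_le (Nat.choose_le_succ_of_lt_half_left (by omega))

variable {G : Type*} [Group G] {c : G → ℕ} {B R : Type*}

/-- A family of finite subsets of `B` indexed by `G` whose cardinalities, read from the base point,
are given by `c`. When `c` is injective the cardinalities determine the base point, so that the
permutations of `G` compatible with these families are the left translations. -/
@[ext]
structure ColoredFamily (c : G → ℕ) (B : Type*) where
  base : G
  part : G → Finset B
  card_part : ∀ x, (part x).card = c (base⁻¹ * x)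

namespace ColoredFamily

instance [Finite G] [Finite B] : Finite (ColoredFamily c B) :=
  Finite.of_injective (fun v ↦ (v.base, v.part)) fun v w h ↦ by
    ext1
    exacts [congrArg Prod.fst h, congrArg Prod.snd h]

theorem nonempty [Fintype B] (hc : ∀ g, c g ≤ Fintype.card B) : Nonempty (ColoredFamily c B) := by
  have hpart (x : G) : ∃ S : Finset B, S.card = c (1⁻¹ * x) :=
    (Finset.exists_subset_card_eq (hc _)).imp fun _ ↦ And.right
  choose part hpart using hpart
  exact ⟨⟨1, part, hpart⟩⟩

instance [DecidableEq B] : MulAction (G → Equiv.Perm B) (ColoredFamily c B) where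
  smul f v := ⟨v.base, fun x ↦ f x • v.part x, fun x ↦ by simp [v.card_part]⟩
  one_smul v := ColoredFamily.ext rfl (funext fun x ↦ one_smul _ (v.part x))
  mul_smul f f' v := ColoredFamily.ext rfl (funext fun x ↦ mul_smul (f x) (f' x) (v.part x))

theorem update_smul [DecidableEq B] [DecidableEq G] {v : ColoredFamily c B} {x : G}
    {ρ : Equiv.Perm B} (hρ : ρ • v.part x = v.part x) :
    (Function.update 1 x ρ : G → Equiv.Perm B) • v = v := by
  refine ColoredFamily.ext rfl (funext fun y ↦ ?_)
  change (Function.update 1 x ρ : G → Equiv.Perm B) y • v.part y = v.part y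
  rcases eq_or_ne y x with rfl | hy
  · rwa [Function.update_self]
  · rw [Function.update_of_ne hy, Pi.one_apply, one_smul]

instance : MulAction G (ColoredFamily c B) where
  smul g v := ⟨g * v.base, fun x ↦ v.part (g⁻¹ * x), fun x ↦ by simp [v.card_part, mul_assoc]⟩
  one_smul v := ColoredFamily.ext (one_mul _)
    (funext fun x ↦ congrArg v.part (by rw [inv_one, one_mul]))
  mul_smul g h v := ColoredFamily.ext (mul_assoc _ _ _)
    (funext fun x ↦ congrArg v.part (by rw [mul_inv_rev, mul_assoc]))

end ColoredFamily

/-- The set on which `G` is realized: `card G` copies of `B`, permuted by `G`, the families of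
subsets of these copies, and a set `R` adjusting the total number of points. -/
inductive ColoredPoint (c : G → ℕ) (B R : Type*)
  | cell (x : G) (b : B)
  | family (v : ColoredFamily c B)
  | pad (r : R)

/-- The group whose image in the permutations of `ColoredPoint c B R` is the core-free subgroup: a
permutation of each copy of `B`, and a permutation of `R`. -/
abbrev ColorPerm (G B R : Type*) := (G → Equiv.Perm B) × Equiv.Perm R

namespace ColoredPoint

/-- `ColoredPoint` as an iterated disjoint union. -/
def equivSum : ColoredPoint c B R ≃ (G × B) ⊕ ColoredFamily c B ⊕ R where
  toFun
    | cell x b => .inl (x, b)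
    | family v => .inr (.inl v)
    | pad r => .inr (.inr r)
  invFun
    | .inl p => cell p.1 p.2
    | .inr (.inl v) => family v
    | .inr (.inr r) => pad r
  left_inv p := by cases p <;> rfl
  right_inv p := by rcases p with _ | _ | _ <;> rfl

instance [Finite G] [Finite B] [Finite R] : Finite (ColoredPoint c B R) :=
  Finite.of_equiv _ equivSum.symm

theorem natCard_coloredPoint [Finite G] [Finite B] [Finite R] : Nat.card (ColoredPoint c B R) =
    Nat.card G * Nat.card B + (Nat.card (ColoredFamily c B) + Nat.card R) := by
  rw [Nat.card_congr equivSum, Nat.card_sum, Nat.card_sum, Nat.card_prod]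

instance [DecidableEq B] : MulAction (ColorPerm G B R) (ColoredPoint c B R) where
  smul a
    | cell x b => cell x (a.1 x b)
    | family v => family (a.1 • v)
    | pad r => pad (a.2 r)
  one_smul p := by
    cases p with
    | family v => exact congrArg family (one_smul _ v)
    | _ => rfl
  mul_smul a a' p := by
    cases p with
    | family v => exact congrArg family (mul_smul a.1 a'.1 v)
    | _ => rfl

instance : MulAction G (ColoredPoint c B R) where
  smul g
    | cell x b => cell (g * x) b
    | family v => family (g • v)
    | pad r => pad r
  one_smul p := by
    cases p with
    | cell x b => exact congrArg (cell · b) (one_mul x)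
    | family v => exact congrArg family (one_smul G v)
    | pad r => rfl
  mul_smul g h p := by
    cases p with
    | cell x b => exact congrArg (cell · b) (mul_assoc g h x)
    | family v => exact congrArg family (mul_smul g h v)
    | pad r => rfl

theorem exists_forall_apply_pad [Finite R] {σ : Equiv.Perm (ColoredPoint c B R)}
    (hpad : ∀ r, ∃ s, σ (pad r) = pad s) :
    ∃ τ : Equiv.Perm R, ∀ r, σ (pad r) = pad (τ r) := by
  choose τ hτ using hpad
  have hinj : Function.Injective τ := fun r s h ↦
    pad.inj (σ.injective (by rw [hτ, hτ, h]))
  exact ⟨Equiv.ofBijective τ (Finite.injective_iff_bijective.1 hinj), hτ⟩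

section Action

variable [DecidableEq B]

theorem smul_smul_comm (g : G) (a : ColorPerm G B R) (p : ColoredPoint c B R) :
    g • a • p = (fun x ↦ a.1 (g⁻¹ * x), a.2) • g • p := by
  cases p with
  | cell x b =>
    change cell (g * x) (a.1 x b) = cell (g * x) (a.1 (g⁻¹ * (g * x)) b)
    rw [inv_mul_cancel_left]
  | _ => rfl

variable (c B R) in
/-- The permutations of the points which preserve each of the `card G` copies of `B`. -/
def colorSubgroup : Subgroup (Equiv.Perm (ColoredPoint c B R)) :=
  (toPermHom (ColorPerm G B R) (ColoredPoint c B R)).range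

theorem toPermHom_mem_normalizer (g : G) :
    toPermHom G (ColoredPoint c B R) g ∈
      Subgroup.normalizer (colorSubgroup c B R : Set (Equiv.Perm (ColoredPoint c B R))) := by
  refine map_mem_normalizer_of_forall_conj_mem (fun g σ hσ ↦ ?_) g
  obtain ⟨a, rfl⟩ := hσ
  refine ⟨(fun x ↦ a.1 (g⁻¹ * x), a.2), Equiv.ext fun p ↦ ?_⟩
  simpa using (smul_smul_comm g a (g⁻¹ • p)).symm

theorem eq_one_of_toPermHom_mem_colorSubgroup [Nonempty B] {g : G}
    (hg : toPermHom G (ColoredPoint c B R) g ∈ colorSubgroup c B R) : g = 1 := by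
  obtain ⟨a, ha⟩ := hg
  obtain ⟨b⟩ := ‹Nonempty B›
  have hcell : cell 1 (a.1 1 b) = cell (g * 1) b := Equiv.congr_fun ha (cell 1 b)
  exact ((cell.inj hcell).1.trans (mul_one g)).symm

theorem normalCore_colorSubgroup [Nonempty B] [Nonempty R] :
    (colorSubgroup c B R).normalCore = ⊥ := by
  obtain ⟨b⟩ := ‹Nonempty B›
  obtain ⟨r⟩ := ‹Nonempty R›
  refine normalCore_eq_bot_of_not_isPretransitive fun htrans ↦ ?_
  obtain ⟨⟨_, a, rfl⟩, ha⟩ := htrans.exists_smul_eq (cell 1 b) (pad r)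
  have hne : (cell 1 (a.1 1 b) : ColoredPoint c B R) = pad r := ha
  cases hne

section Orbits

theorem ncard_orbit_cell_le [Fintype B] (x : G) (b : B) :
    (orbit (ColorPerm G B R) (cell x b : ColoredPoint c B R)).ncard ≤
      Fintype.card B := by
  have hsub : orbit (ColorPerm G B R) (cell x b : ColoredPoint c B R) ⊆
      Set.range (cell x) := by
    rintro _ ⟨a, rfl⟩
    exact ⟨a.1 x b, rfl⟩
  calc _ ≤ (Set.range (cell x : B → ColoredPoint c B R)).ncard := Set.ncard_le_ncard hsub
    _ = Nat.card B := Set.ncard_range_of_injective fun _ _ h ↦ (cell.inj h).2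
    _ = _ := Nat.card_eq_fintype_card

theorem ncard_orbit_family_le [Finite G] [Finite B] (v : ColoredFamily c B) :
    (orbit (ColorPerm G B R) (family v : ColoredPoint c B R)).ncard ≤
      Nat.card (ColoredFamily c B) := by
  have hsub : orbit (ColorPerm G B R) (family v : ColoredPoint c B R) ⊆
      Set.range family := by
    rintro _ ⟨a, rfl⟩
    exact ⟨a.1 • v, rfl⟩
  exact (Set.ncard_le_ncard hsub).trans (Set.ncard_range_of_injective fun _ _ ↦ family.inj).le

variable [Finite G] [Finite R]

theorem choose_le_ncard_orbit_family [Fintype B] (v : ColoredFamily c B) :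
    (Fintype.card B).choose (c 1) ≤
      (orbit (ColorPerm G B R) (family v : ColoredPoint c B R)).ncard := by
  classical
  have hpart : v.part v.base ∈ Set.powersetCard B (c 1) := by
    rw [Set.powersetCard.mem_iff, v.card_part, inv_mul_cancel]
  have hex (S : Set.powersetCard B (c 1)) : ∃ w,
      family w ∈ orbit (ColorPerm G B R) (family v : ColoredPoint c B R) ∧
      w.part v.base = S := by
    have := Set.powersetCard.isPretransitive (α := B) (n := c 1)
    obtain ⟨π, hπ⟩ := exists_smul_eq (Equiv.Perm B) (⟨_, hpart⟩ : Set.powersetCard B (c 1)) S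
    exact ⟨_, ⟨(fun _ ↦ π, 1), rfl⟩, congrArg Subtype.val hπ⟩
  choose w hw hwS using hex
  rw [← Nat.card_eq_fintype_card, ← Set.powersetCard.card, ← Nat.card_coe_set_eq]
  refine Nat.card_le_card_of_injective (fun S ↦ (⟨family (w S), hw S⟩ : orbit _ _)) ?_
  intro S S' h
  have hw : w S = w S' := family.inj (congrArg Subtype.val h)
  exact Subtype.ext (by rw [← hwS, hw, hwS])

theorem card_le_ncard_orbit_pad [Finite B] (r : R) :
    Nat.card R ≤ (orbit (ColorPerm G B R) (pad r : ColoredPoint c B R)).ncard := by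
  classical
  have hmem (s : R) : (pad s : ColoredPoint c B R) ∈
      orbit (ColorPerm G B R) (pad r : ColoredPoint c B R) :=
    ⟨(1, Equiv.swap r s), congrArg pad (Equiv.swap_apply_left r s)⟩
  rw [← Nat.card_coe_set_eq]
  exact Nat.card_le_card_of_injective (fun s ↦ (⟨_, hmem s⟩ : orbit _ _))
    fun s s' h ↦ pad.inj (congrArg Subtype.val h)

theorem ncard_orbit_le_card_iff [Fintype B] (hc : 2 ≤ c 1) (hcB : 2 * c 1 < Fintype.card B)
    (hBR : Fintype.card B < Nat.card R) (p : ColoredPoint c B R) :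
    (orbit (ColorPerm G B R) p).ncard ≤ Fintype.card B ↔ ∃ x b, p = cell x b := by
  refine ⟨fun h ↦ ?_, ?_⟩
  · cases p with
    | cell x b => exact ⟨x, b, rfl⟩
    | family v =>
      exact absurd h ((lt_choose_of_two_le hc hcB).trans_le (choose_le_ncard_orbit_family v)).not_ge
    | pad r => exact absurd h (hBR.trans_le (card_le_ncard_orbit_pad r)).not_ge
  · rintro ⟨x, b, rfl⟩
    exact ncard_orbit_cell_le x b

theorem card_le_ncard_orbit_iff [Fintype B] (hBR : Fintype.card B < Nat.card R)
    (hFR : Nat.card (ColoredFamily c B) < Nat.card R) (p : ColoredPoint c B R) :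
    Nat.card R ≤ (orbit (ColorPerm G B R) p).ncard ↔ ∃ r, p = pad r := by
  refine ⟨fun h ↦ ?_, ?_⟩
  · cases p with
    | cell x b => exact absurd h ((ncard_orbit_cell_le x b).trans_lt hBR).not_ge
    | family v => exact absurd h ((ncard_orbit_family_le v).trans_lt hFR).not_ge
    | pad r => exact ⟨r, rfl⟩
  · rintro ⟨r, rfl⟩
    exact card_le_ncard_orbit_pad r

end Orbits

section Normalizer

variable {σ : Equiv.Perm (ColoredPoint c B R)}

theorem exists_forall_apply_cell
    (hσ : σ ∈ Subgroup.normalizer (colorSubgroup c B R : Set (Equiv.Perm (ColoredPoint c B R))))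
    [Finite B] (hcell : ∀ x b, ∃ y b', σ (cell x b) = cell y b') :
    ∃ (π : G → G) (f : G → Equiv.Perm B), ∀ x b, σ (cell x b) = cell (π x) (f x b) := by
  choose π f hf using hcell
  have hπ (x b b') : π x b = π x b' := by
    obtain ⟨a, ha⟩ := exists_forall_apply_smul_of_mem_normalizer_range hσ
      (fun _ ↦ Equiv.swap b b', 1)
    have h : σ (cell x (Equiv.swap b b' b)) = a • σ (cell x b) := ha (cell x b)
    rw [Equiv.swap_apply_left, hf, hf] at h
    exact (cell.inj h).1.symm
  have hinj (x) : Function.Injective (f x) := fun b b' h ↦ by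
    have h' : σ (cell x b) = σ (cell x b') := by rw [hf, hf, hπ x b b', h]
    exact (cell.inj (σ.injective h')).2
  rcases isEmpty_or_nonempty B with hB | ⟨⟨b₀⟩⟩
  · exact ⟨id, 1, fun _ b ↦ isEmptyElim b⟩
  · refine ⟨fun x ↦ π x b₀,
      fun x ↦ Equiv.ofBijective (f x) (Finite.injective_iff_bijective.1 (hinj x)), fun x b ↦ ?_⟩
    rw [hf, hπ x b b₀]
    rfl

variable {π : G → G} {f : G → Equiv.Perm B}

/-- A permutation of the copy `x` fixing `v` is conjugated by `σ` to a permutation of the copy `π x`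
fixing `w`. -/
theorem part_apply_eq_smul [Fintype B] (hc₀ : ∀ g, 0 < c g)
    (hcB : ∀ g, 2 * c g < Fintype.card B)
    (hσ : σ ∈ Subgroup.normalizer (colorSubgroup c B R : Set (Equiv.Perm (ColoredPoint c B R))))
    (hcell : ∀ x b, σ (cell x b) = cell (π x) (f x b)) {v w : ColoredFamily c B}
    (hvw : σ (family v) = family w) (x : G) : w.part (π x) = f x • v.part x := by
  classical
  refine finset_eq_of_stabilizer_le_stabilizer ?_ ?_ ?_ fun ρ hρ ↦ ?_
  · rw [Finset.card_smul_finset, v.card_part]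
    exact hcB _
  · rw [w.card_part]
    exact hcB _
  · rw [← Finset.card_pos, w.card_part]
    exact hc₀ _
  have hρv : ((f x)⁻¹ * ρ * f x) • v.part x = v.part x := by
    rw [mul_smul, mul_smul, mem_stabilizer_iff.1 hρ, inv_smul_smul]
  let u : G → Equiv.Perm B := Function.update 1 x ((f x)⁻¹ * ρ * f x)
  have hux : u x = (f x)⁻¹ * ρ * f x := Function.update_self ..
  obtain ⟨a, ha⟩ := exists_forall_apply_smul_of_mem_normalizer_range hσ (u, 1)
  have haρ : a.1 (π x) = ρ := Equiv.ext fun b ↦ by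
    have h : σ (cell x (u x ((f x)⁻¹ b))) = a • σ (cell x ((f x)⁻¹ b)) :=
      ha (cell x ((f x)⁻¹ b))
    rw [hcell, hcell, hux] at h
    simpa using (cell.inj h).2.symm
  have haw : w = a.1 • w := by
    have h : σ (family (u • v)) = a • σ (family v) := ha (family v)
    rw [ColoredFamily.update_smul hρv, hvw] at h
    exact family.inj h
  rw [mem_stabilizer_iff, ← haρ]
  exact (congrArg (fun v ↦ v.part (π x)) haw).symm

theorem eq_base_mul_inv_base_mul (hc : Function.Injective c) {v w : ColoredFamily c B}
    (hvw : ∀ x, w.part (π x) = f x • v.part x) (x : G) : π x = w.base * v.base⁻¹ * x := by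
  have hcard : c (w.base⁻¹ * π x) = c (v.base⁻¹ * x) := by
    rw [← w.card_part, hvw, Finset.card_smul_finset, v.card_part]
  rw [mul_assoc, ← hc hcard, mul_inv_cancel_left]

theorem family_eq_smul (hc : Function.Injective c) {v w : ColoredFamily c B}
    (hvw : ∀ x, w.part (π x) = f x • v.part x) (hπ : ∀ x, π x = π 1 * x) : w = π 1 • f • v := by
  refine ColoredFamily.ext ?_ (funext fun x ↦ ?_)
  · have hbase := eq_base_mul_inv_base_mul hc hvw v.base
    rw [inv_mul_cancel_right, hπ] at hbase
    exact hbase.symm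
  · have hpart := hvw ((π 1)⁻¹ * x)
    rwa [hπ, mul_inv_cancel_left] at hpart

theorem exists_inv_mul_mem_colorSubgroup_of_forall_apply [Fintype B] [Finite R]
    (hc : Function.Injective c) (hc₀ : ∀ g, 0 < c g) (hcB : ∀ g, 2 * c g < Fintype.card B)
    (hσ : σ ∈ Subgroup.normalizer (colorSubgroup c B R : Set (Equiv.Perm (ColoredPoint c B R))))
    (hcell : ∀ x b, ∃ y b', σ (cell x b) = cell y b')
    (hfamily : ∀ v, ∃ w, σ (family v) = family w) (hpad : ∀ r, ∃ s, σ (pad r) = pad s) :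
    ∃ g, (toPermHom G _ g)⁻¹ * σ ∈ colorSubgroup c B R := by
  obtain ⟨π, f, hf⟩ := exists_forall_apply_cell hσ hcell
  obtain ⟨τ, hτ⟩ := exists_forall_apply_pad hpad
  choose t ht using hfamily
  have hpart (v) := part_apply_eq_smul hc₀ hcB hσ hf (ht v)
  have hπ (x) : π x = π 1 * x := by
    obtain ⟨v⟩ := ColoredFamily.nonempty (c := c) (B := B) fun g ↦ by linarith [hcB g]
    rw [eq_base_mul_inv_base_mul hc (hpart v) x, eq_base_mul_inv_base_mul hc (hpart v) 1, mul_one]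
  refine ⟨π 1, (f, τ), eq_inv_mul_iff_mul_eq.2 (Equiv.ext fun p ↦ ?_)⟩
  cases p with
  | cell x b => exact (congrArg (cell · (f x b)) (hπ x).symm).trans (hf x b).symm
  | family v =>
    exact (congrArg family (family_eq_smul hc (hpart v) hπ).symm).trans (ht v).symm
  | pad r => exact (hτ r).symm

theorem exists_inv_mul_mem_colorSubgroup [Finite G] [Fintype B] [Finite R]
    (hc : Function.Injective c) (hc₂ : ∀ g, 2 ≤ c g) (hcB : ∀ g, 2 * c g < Fintype.card B)
    (hBR : Fintype.card B < Nat.card R) (hFR : Nat.card (ColoredFamily c B) < Nat.card R)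
    (hσ : σ ∈ Subgroup.normalizer (colorSubgroup c B R : Set (Equiv.Perm (ColoredPoint c B R)))) :
    ∃ g, (toPermHom G _ g)⁻¹ * σ ∈ colorSubgroup c B R := by
  have horbit (p) := ncard_orbit_apply_of_mem_normalizer_range hσ p
  have hcell (p) : (∃ x b, σ p = cell x b) ↔ ∃ x b, p = cell x b := by
    simp only [← ncard_orbit_le_card_iff (hc₂ 1) (hcB 1) hBR, horbit]
  have hpad (p) : (∃ r, σ p = pad r) ↔ ∃ r, p = pad r := by
    simp only [← card_le_ncard_orbit_iff hBR hFR, horbit]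
  refine exists_inv_mul_mem_colorSubgroup_of_forall_apply hc (fun g ↦ by linarith [hc₂ g]) hcB hσ
    (fun x b ↦ (hcell _).2 ⟨x, b, rfl⟩) (fun v ↦ ?_) fun r ↦ (hpad _).2 ⟨r, rfl⟩
  cases h : σ (family v) with
  | cell x b => simpa using (hcell _).1 ⟨x, b, h⟩
  | family w => exact ⟨w, rfl⟩
  | pad r => simpa using (hpad _).1 ⟨r, h⟩

end Normalizer

end Action

theorem hasCoreFreeNormalizerQuotient_perm [Finite G] [Fintype B] [Finite R]
    (hc : Function.Injective c) (hc₂ : ∀ g, 2 ≤ c g) (hcB : ∀ g, 2 * c g < Fintype.card B)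
    (hBR : Fintype.card B < Nat.card R) (hFR : Nat.card (ColoredFamily c B) < Nat.card R) :
    HasCoreFreeNormalizerQuotient (Equiv.Perm (ColoredPoint c B R)) G := by
  classical
  have hB : Nonempty B := Fintype.card_pos_iff.1 (by linarith [hcB 1])
  have hR : Nonempty R := (Nat.card_pos_iff.1 (by linarith)).1
  exact ⟨colorSubgroup c B R, normalCore_colorSubgroup,
    nonempty_normalizer_quotient_mulEquiv (toPermHom G _) toPermHom_mem_normalizer
      (fun _ ↦ eq_one_of_toPermHom_mem_colorSubgroup)
      fun _ ↦ exists_inv_mul_mem_colorSubgroup hc hc₂ hcB hBR hFR⟩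

end ColoredPoint

theorem exists_forall_ge_hasCoreFreeNormalizerQuotient (G : Type*) [Group G] [Finite G] :
    ∃ N, ∀ n ≥ N, HasCoreFreeNormalizerQuotient (Equiv.Perm (Fin n)) G := by
  let c (g : G) : ℕ := Finite.equivFin G g + 2
  let B := Fin (2 * Nat.card G + 3)
  have hc : Function.Injective c := fun g h hgh ↦
    (Finite.equivFin G).injective (Fin.ext (Nat.add_right_cancel hgh))
  have hcB (g) : 2 * c g < Fintype.card B := by
    rw [Fintype.card_fin]
    have := (Finite.equivFin G g).isLt
    lia
  refine ⟨Nat.card G * Nat.card B + (Nat.card (ColoredFamily c B) +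
    (Fintype.card B + Nat.card (ColoredFamily c B) + 1)), fun n hn ↦ ?_⟩
  obtain ⟨r, rfl⟩ := Nat.exists_eq_add_of_le hn
  let R := Fin (Fintype.card B + Nat.card (ColoredFamily c B) + 1 + r)
  have hR : Nat.card R = Fintype.card B + Nat.card (ColoredFamily c B) + 1 + r := Nat.card_fin _
  refine HasCoreFreeNormalizerQuotient.congr_left
    (Finite.equivFinOfCardEq ?_ : ColoredPoint c B R ≃ _).permCongrHom
    (ColoredPoint.hasCoreFreeNormalizerQuotient_perm hc (fun _ ↦ Nat.le_add_left _ _) hcB ?_ ?_)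
  · rw [ColoredPoint.natCard_coloredPoint, hR]
    lia
  all_goals lia

end ColoredFamilies

theorem exists_finite_separable_of_hasCoreFreeNormalizerQuotient {K Ω : Type*} [Field K] [Field Ω]
    [Algebra K Ω] [Normal K Ω] {F D : IntermediateField K Ω} [FiniteDimensional K F] [IsGalois K F]
    [Normal K D] {G : Type*} [Group G] (hG : HasCoreFreeNormalizerQuotient (F ≃ₐ[K] F) G)
    (hFD : ¬ F ≤ D) :
    ∃ E : IntermediateField K Ω, FiniteDimensional K E ∧ Algebra.IsSeparable K E ∧
      Nonempty ((E ≃ₐ[K] E) ≃* G) ∧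
      2 ≤ Module.finrank D (extendScalars (le_sup_right : D ≤ E ⊔ D)) := by
  obtain ⟨H, hcore, ⟨φ⟩⟩ := hG
  obtain ⟨E, rfl⟩ : ∃ E : IntermediateField K F, E.fixingSubgroup = H :=
    ⟨fixedField H, IntermediateField.fixingSubgroup_fixedField H⟩
  have eE : E ≃ₐ[K] lift E := liftAlgEquiv E
  have hfin : FiniteDimensional K (lift E) := eE.toLinearEquiv.finiteDimensional
  refine ⟨lift E, hfin, AlgEquiv.Algebra.isSeparable eE,
    ⟨((AlgEquiv.autCongr eE).symm.trans (normalizerQuotientEquivAut E).symm).trans φ⟩,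
    two_le_finrank_extendScalars_sup fun hED ↦ hFD ?_⟩
  exact le_of_lift_le_of_normalCore_fixingSubgroup_eq_bot F D E hcore hED

theorem exists_function_field_extension_general (k : Type*) [Field k] (G : Type*) [Group G]
    [Finite G] :
    ∃ E : IntermediateField (RatFunc k) (AlgebraicClosure (RatFunc k)),
      FiniteDimensional (RatFunc k) E ∧ Algebra.IsSeparable (RatFunc k) E ∧
      Nonempty ((E ≃ₐ[RatFunc k] E) ≃* G) ∧
      2 ≤ Module.finrank
        (adjoin (RatFunc k) {z : AlgebraicClosure (RatFunc k) | IsIntegral k z})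
        (extendScalars
          (le_sup_right :
            adjoin (RatFunc k) {z : AlgebraicClosure (RatFunc k) | IsIntegral k z} ≤
              E ⊔ adjoin (RatFunc k) {z : AlgebraicClosure (RatFunc k) | IsIntegral k z})) := by
  let Ω := AlgebraicClosure (RatFunc k)
  obtain ⟨N, hN⟩ := exists_forall_ge_hasCoreFreeNormalizerQuotient G
  obtain ⟨n, hnN, hp, hn⟩ := exists_gt_prime_add_two_natCast_ne_zero k N
  let f : k[X] := X ^ (n + 2) - X ^ 2
  have hdeg : f.natDegree = n + 2 := natDegree_X_pow_sub_X_sq (by rintro rfl; simp at hn)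
  let q : (RatFunc k)[X] := fiberPolynomial f RatFunc.X
  let F : IntermediateField (RatFunc k) Ω := adjoin (RatFunc k) (q.rootSet Ω)
  have hsplit : q.IsSplittingField (RatFunc k) F :=
    adjoin_rootSet_isSplittingField (IsAlgClosed.splits _)
  have hfin : FiniteDimensional (RatFunc k) F := IsSplittingField.finiteDimensional F q
  have hgal : IsGalois (RatFunc k) F := IsGalois.of_separable_splitting_field
    (separable_fiberPolynomial (derivative_X_pow_sub_X_sq_ne_zero hn))
  have hnormal := normal_adjoin_isIntegral (k := k) (K := RatFunc k) (Ω := Ω)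
  obtain ⟨e⟩ := nonempty_gal_trinomial_mulEquiv_perm hn hp
  have hperm := (hN (n + 2) (by lia)).congr_left
    (e.symm.trans (AlgEquiv.autCongr (IsSplittingField.algEquiv F q)).symm)
  refine exists_finite_separable_of_hasCoreFreeNormalizerQuotient hperm fun hle ↦ ?_
  have hirr : Irreducible q := irreducible_fiberPolynomial (by lia)
  obtain ⟨x, hx⟩ := IsAlgClosed.exists_aeval_eq_zero Ω q hirr.degree_pos.ne'
  exact notMem_adjoin_integral_of_aeval_fiberPolynomial (by lia) hx
    (hle (subset_adjoin _ _ (mem_rootSet.2 ⟨hirr.ne_zero, hx⟩)))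

/-- Over a Hilbertian field `k`, every finite group `G` is the automorphism group of some
finite separable extension `E/k(T)` with `[E·k̄ : k̄(T)] ≥ 2`, where `k̄` is the algebraic
closure of `k` inside an algebraic closure `Ω` of `k(T)` (realized as the elements of `Ω`
integral over `k`), and `E·k̄` denotes the compositum of `E` and `k̄(T)` inside `Ω`. -/
theorem exists_function_field_extension (k : Type*) [Field k] (hk : IsHilbertian k)
    (G : Type*) [Group G] [Finite G] :
    ∃ E : IntermediateField (RatFunc k) (AlgebraicClosure (RatFunc k)),
      FiniteDimensional (RatFunc k) E ∧ Algebra.IsSeparable (RatFunc k) E ∧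
      Nonempty ((E ≃ₐ[RatFunc k] E) ≃* G) ∧
      2 ≤ Module.finrank
        (adjoin (RatFunc k) {z : AlgebraicClosure (RatFunc k) | IsIntegral k z})
        (extendScalars
          (le_sup_right :
            adjoin (RatFunc k) {z : AlgebraicClosure (RatFunc k) | IsIntegral k z} ≤
              E ⊔ adjoin (RatFunc k) {z : AlgebraicClosure (RatFunc k) | IsIntegral k z})) :=
  exists_function_field_extension_general k G
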